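/- There exists an absolute constant C > 0 with the following property: for all real numbers a < b and every vector field v : ℝ³ → ℝ³ that is continuously differentiable on a neighborhood of the closed cylinder D̄ × [a,b], satisfies div v = 0 there, satisfies v(x)·(x₁, x₂, 0) = 0 whenever x₁² + x₂² = 1 and x₃ ∈ [a,b], and has vanishing flux ∫_D v₃(x₁, x₂, z) dx₁dx₂ = 0 for every z ∈ [a,b], one has ∫_{D×[a,b]} |v|² dx ≤ C ∫_{D×[a,b]} Σ_{i=1}^{2} Σ_{j=1}^{3} (∂_{x_i} v_j)² dx; that is, the L² norm of v is controlled by the L² norm of its horizontal gradient alone, with a constant independent of the length b − a. -/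

import Mathlib

open MeasureTheory

/-- Partial derivative `∂_{x_i} f` of a scalar function on `ℝ³`. -/
noncomputable def pd (i : Fin 3) (f : (Fin 3 → ℝ) → ℝ) (x : Fin 3 → ℝ) : ℝ :=
  fderiv ℝ f x (Pi.single i 1)

/-- The open unit disk in the plane. -/
def unitDisk : Set (Fin 2 → ℝ) := {xh | xh 0 ^ 2 + xh 1 ^ 2 < 1}

/-- The solid finite cylinder `D × [a,b]` with `D` the open unit disk. -/
def solidCyl (a b : ℝ) : Set (Fin 3 → ℝ) :=
  {x | x 0 ^ 2 + x 1 ^ 2 < 1 ∧ x 2 ∈ Set.Icc a b}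

/-- The closed finite cylinder `D̄ × [a,b]`. -/
def closedCyl (a b : ℝ) : Set (Fin 3 → ℝ) :=
  {x | x 0 ^ 2 + x 1 ^ 2 ≤ 1 ∧ x 2 ∈ Set.Icc a b}

open scoped ENNReal

/-!
Everything happens on a horizontal slice `D × {z}`, where the required inequality is
two-dimensional; integrating it over `z` makes the constant independent of `b - a`.

Of the two corners `(p₁, q₂)` and `(q₁, p₂)` at least one lies in the closed disk, so two points
`p` and `q` are joined by two axis-parallel segments. Hence `|f p - f q|²` is at most `K p + K q`,
where `K` measures the energy of `f` on the horizontal and the vertical chord through a point, and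
averaging `K` over the disk costs only the Dirichlet energy. A function with oscillation controlled
in this way satisfies a Poincaré inequality as soon as it has mean zero, which applies to `v₃`, or
is itself bounded by `K` on a subset of positive measure. The latter applies to `v₁`: at the two
ends `(±c, t)` of a horizontal chord, tangency reads `c v₁ = ∓ t v₂`, so for `t² ≤ 1/2` the sum of
the two end values of `v₁` is controlled by the variation of `v₂`, and `v₁` is controlled on the
whole chord. Exchanging the coordinates handles `v₂`.
-/

section PoincareFromOscillation

variable {α : Type*} [MeasurableSpace α] {μ : Measure α}

theorem integral_le_mul_integral_of_lintegral_le {f g : α → ℝ} (hf : Integrable f μ)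
    (hg : Integrable g μ) (hf0 : 0 ≤ f) (hg0 : 0 ≤ g) {c : ℝ} (hc : 0 ≤ c)
    (h : ∫⁻ a, ENNReal.ofReal (f a) ∂μ ≤
      ENNReal.ofReal c * ∫⁻ a, ENNReal.ofReal (g a) ∂μ) :
    ∫ a, f a ∂μ ≤ c * ∫ a, g a ∂μ := by
  rw [← ofReal_integral_eq_lintegral_ofReal hf (Filter.Eventually.of_forall hf0),
    ← ofReal_integral_eq_lintegral_ofReal hg (Filter.Eventually.of_forall hg0),
    ← ENNReal.ofReal_mul hc] at h
  exact (ENNReal.ofReal_le_ofReal_iff (mul_nonneg hc (integral_nonneg hg0))).1 h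

theorem sq_lintegral_le_measure_univ_mul_lintegral_sq {f : α → ℝ≥0∞} (hf : AEMeasurable f μ) :
    (∫⁻ a, f a ∂μ) ^ 2 ≤ μ Set.univ * ∫⁻ a, f a ^ 2 ∂μ := by
  have holder : ∫⁻ a, f a ∂μ ≤ μ Set.univ ^ (1 / 2 : ℝ) * (∫⁻ a, f a ^ 2 ∂μ) ^ (1 / 2 : ℝ) := by
    simpa using ENNReal.lintegral_mul_le_Lp_mul_Lq μ Real.HolderConjugate.two_two
      aemeasurable_one hf
  calc (∫⁻ a, f a ∂μ) ^ 2
      ≤ (μ Set.univ ^ (1 / 2 : ℝ) * (∫⁻ a, f a ^ 2 ∂μ) ^ (1 / 2 : ℝ)) ^ 2 := by gcongr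
    _ = μ Set.univ * ∫⁻ a, f a ^ 2 ∂μ := by
      rw [mul_pow, ← ENNReal.rpow_mul_natCast, ← ENNReal.rpow_mul_natCast]
      norm_num

variable {E : Type*} [NormedAddCommGroup E]

theorem enorm_add_sq_le (x y : E) : ‖x + y‖ₑ ^ 2 ≤ 2 * (‖x‖ₑ ^ 2 + ‖y‖ₑ ^ 2) := by
  calc ‖x + y‖ₑ ^ 2 ≤ (‖x‖ₑ + ‖y‖ₑ) ^ 2 := by gcongr; exact enorm_add_le x y
    _ ≤ 2 * (‖x‖ₑ ^ 2 + ‖y‖ₑ ^ 2) := by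
      simpa [mul_add, show (2 : ℝ) - 1 = 1 by norm_num] using
        ENNReal.rpow_add_le_mul_rpow_add_rpow ‖x‖ₑ ‖y‖ₑ one_le_two

theorem measure_mul_setLIntegral_enorm_sq_le_of_subset {s t : Set α} (hs : MeasurableSet s)
    (ht : MeasurableSet t) (hts : t ⊆ s) {f : α → E} {K : α → ℝ≥0∞} (hK : Measurable K)
    (hosc : ∀ p ∈ s, ∀ q ∈ s, ‖f p - f q‖ₑ ^ 2 ≤ K p + K q) (hf : ∀ q ∈ t, ‖f q‖ₑ ^ 2 ≤ K q) :
    μ t * ∫⁻ p in s, ‖f p‖ₑ ^ 2 ∂μ ≤ 6 * μ s * ∫⁻ p in s, K p ∂μ := by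
  have pointwise : ∀ p ∈ s, μ t * ‖f p‖ₑ ^ 2 ≤ 2 * μ t * K p + 4 * ∫⁻ q in t, K q ∂μ := by
    intro p hp
    calc μ t * ‖f p‖ₑ ^ 2 = ∫⁻ _ in t, ‖f p‖ₑ ^ 2 ∂μ := by rw [setLIntegral_const, mul_comm]
      _ ≤ ∫⁻ q in t, (2 * K p + 4 * K q) ∂μ := by
        refine setLIntegral_mono' ht fun q hq => ?_
        calc ‖f p‖ₑ ^ 2 ≤ 2 * (‖f p - f q‖ₑ ^ 2 + ‖f q‖ₑ ^ 2) := by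
              simpa only [sub_add_cancel] using enorm_add_sq_le (f p - f q) (f q)
          _ ≤ 2 * (K p + K q + K q) := by
            gcongr
            exacts [hosc p hp q (hts hq), hf q hq]
          _ = 2 * K p + 4 * K q := by ring
      _ = 2 * μ t * K p + 4 * ∫⁻ q in t, K q ∂μ := by
        rw [lintegral_add_left measurable_const, setLIntegral_const, lintegral_const_mul _ hK]
        ring
  calc μ t * ∫⁻ p in s, ‖f p‖ₑ ^ 2 ∂μ ≤ ∫⁻ p in s, μ t * ‖f p‖ₑ ^ 2 ∂μ :=
        lintegral_const_mul_le _ _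
    _ ≤ ∫⁻ p in s, (2 * μ t * K p + 4 * ∫⁻ q in t, K q ∂μ) ∂μ := setLIntegral_mono' hs pointwise
    _ = 2 * μ t * ∫⁻ p in s, K p ∂μ + 4 * (∫⁻ q in t, K q ∂μ) * μ s := by
      rw [lintegral_add_right _ measurable_const, lintegral_const_mul _ hK, setLIntegral_const]
    _ ≤ 2 * μ s * ∫⁻ p in s, K p ∂μ + 4 * (∫⁻ q in s, K q ∂μ) * μ s := by gcongr
    _ = 6 * μ s * ∫⁻ p in s, K p ∂μ := by ring

variable [NormedSpace ℝ E] [CompleteSpace E]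

theorem measure_univ_mul_enorm_sq_le_of_integral_eq_zero [IsFiniteMeasure μ] {f : α → E}
    (hf : Integrable f μ) (hmean : ∫ a, f a ∂μ = 0) (c : E) :
    μ Set.univ * ‖c‖ₑ ^ 2 ≤ ∫⁻ a, ‖c - f a‖ₑ ^ 2 ∂μ := by
  have hcf : Integrable (fun a => c - f a) μ := (integrable_const c).sub hf
  have hint : ∫ a, (c - f a) ∂μ = μ.real Set.univ • c := by
    rw [integral_sub (integrable_const c) hf, hmean, sub_zero, integral_const]
  have hnorm : μ Set.univ * ‖c‖ₑ ≤ ∫⁻ a, ‖c - f a‖ₑ ∂μ := by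
    simpa only [hint, enorm_smul, Real.enorm_of_nonneg measureReal_nonneg,
      ofReal_measureReal (measure_ne_top μ _)] using
      enorm_integral_le_lintegral_enorm (μ := μ) fun a => c - f a
  rcases eq_or_ne (μ Set.univ) 0 with h0 | h0
  · simp [h0]
  refine (ENNReal.mul_le_mul_iff_right h0 (measure_ne_top μ _)).1 ?_
  calc μ Set.univ * (μ Set.univ * ‖c‖ₑ ^ 2) = (μ Set.univ * ‖c‖ₑ) ^ 2 := by ring
    _ ≤ (∫⁻ a, ‖c - f a‖ₑ ∂μ) ^ 2 := by gcongr
    _ ≤ μ Set.univ * ∫⁻ a, ‖c - f a‖ₑ ^ 2 ∂μ :=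
      sq_lintegral_le_measure_univ_mul_lintegral_sq hcf.aestronglyMeasurable.enorm

theorem setLIntegral_enorm_sq_le_of_setIntegral_eq_zero {s : Set α} (hs : MeasurableSet s)
    (hμs : μ s ≠ ∞) {f : α → E} (hf : IntegrableOn f s μ) (hmean : ∫ a in s, f a ∂μ = 0)
    {K : α → ℝ≥0∞} (hK : Measurable K)
    (hosc : ∀ p ∈ s, ∀ q ∈ s, ‖f p - f q‖ₑ ^ 2 ≤ K p + K q) :
    ∫⁻ p in s, ‖f p‖ₑ ^ 2 ∂μ ≤ 2 * ∫⁻ p in s, K p ∂μ := by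
  have : IsFiniteMeasure (μ.restrict s) := isFiniteMeasure_restrict.2 hμs
  have pointwise : ∀ p ∈ s, μ s * ‖f p‖ₑ ^ 2 ≤ μ s * K p + ∫⁻ q in s, K q ∂μ := by
    intro p hp
    calc μ s * ‖f p‖ₑ ^ 2 ≤ ∫⁻ q in s, ‖f p - f q‖ₑ ^ 2 ∂μ := by
          simpa only [Measure.restrict_apply_univ] using
            measure_univ_mul_enorm_sq_le_of_integral_eq_zero hf hmean (f p)
      _ ≤ ∫⁻ q in s, (K p + K q) ∂μ := setLIntegral_mono' hs (hosc p hp)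
      _ = μ s * K p + ∫⁻ q in s, K q ∂μ := by
        rw [lintegral_add_left measurable_const, setLIntegral_const, mul_comm]
  rcases eq_or_ne (μ s) 0 with h0 | h0
  · simp [Measure.restrict_eq_zero.2 h0]
  refine (ENNReal.mul_le_mul_iff_right h0 hμs).1 ?_
  calc μ s * ∫⁻ p in s, ‖f p‖ₑ ^ 2 ∂μ = ∫⁻ p in s, μ s * ‖f p‖ₑ ^ 2 ∂μ :=
        (lintegral_const_mul' _ _ hμs).symm
    _ ≤ ∫⁻ p in s, (μ s * K p + ∫⁻ q in s, K q ∂μ) ∂μ := setLIntegral_mono' hs pointwise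
    _ = μ s * (2 * ∫⁻ p in s, K p ∂μ) := by
      rw [lintegral_add_right _ measurable_const, lintegral_const_mul _ hK, setLIntegral_const]
      ring

end PoincareFromOscillation

section Disk

/-- The open unit disk as a subset of `ℝ × ℝ` rather than `Fin 2 → ℝ`, so that Tonelli's theorem
applies to it directly. -/
def disk : Set (ℝ × ℝ) := {p | p.1 ^ 2 + p.2 ^ 2 < 1}

/-- The closed unit disk in `ℝ × ℝ`; boundary values of the vector field are taken on it. -/
def closedDisk : Set (ℝ × ℝ) := {p | p.1 ^ 2 + p.2 ^ 2 ≤ 1}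

theorem measurableSet_disk : MeasurableSet disk :=
  (isOpen_lt (by fun_prop) (by fun_prop)).measurableSet

theorem disk_subset_closedDisk : disk ⊆ closedDisk :=
  fun p (hp : p.1 ^ 2 + p.2 ^ 2 < 1) => hp.le

theorem swap_mem_disk {p : ℝ × ℝ} : p.swap ∈ disk ↔ p ∈ disk := by
  simp only [disk, Set.mem_ofPred_eq, Prod.fst_swap, Prod.snd_swap, add_comm]

theorem swap_mem_closedDisk {p : ℝ × ℝ} : p.swap ∈ closedDisk ↔ p ∈ closedDisk := by
  simp only [closedDisk, Set.mem_ofPred_eq, Prod.fst_swap, Prod.snd_swap, add_comm]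

theorem closedDisk_subset_Icc_prod_Icc :
    closedDisk ⊆ Set.Icc (-1) 1 ×ˢ Set.Icc (-1) 1 := by
  intro p (hp : p.1 ^ 2 + p.2 ^ 2 ≤ 1)
  exact ⟨abs_le.1 ((sq_le_one_iff_abs_le_one _).1 (by linarith [sq_nonneg p.2])),
    abs_le.1 ((sq_le_one_iff_abs_le_one _).1 (by linarith [sq_nonneg p.1]))⟩

theorem isCompact_closedDisk : IsCompact closedDisk :=
  (isCompact_Icc.prod isCompact_Icc).of_isClosed_subset
    (isClosed_le (by fun_prop) (by fun_prop)) closedDisk_subset_Icc_prod_Icc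

theorem volume_disk_le_four : volume disk ≤ 4 := by
  calc volume disk ≤ volume (Set.Icc (-1 : ℝ) 1 ×ˢ Set.Icc (-1 : ℝ) 1) :=
        measure_mono (disk_subset_closedDisk.trans closedDisk_subset_Icc_prod_Icc)
    _ = 4 := by
      rw [Measure.volume_eq_prod, Measure.prod_prod, Real.volume_Icc,
        ← ENNReal.ofReal_mul (by norm_num)]
      norm_num

theorem mem_closedDisk_of_mem_Icc {x y s t : ℝ} (hx : (x, t) ∈ closedDisk)
    (hy : (y, t) ∈ closedDisk) (hs : s ∈ Set.Icc x y) : (s, t) ∈ closedDisk := by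
  simp only [closedDisk, Set.mem_ofPred_eq] at hx hy ⊢
  rcases le_total 0 s with h | h
  · nlinarith [pow_le_pow_left₀ h hs.2 2]
  · nlinarith [hs.1]

theorem mem_disk_of_mem_Ioo {x y s t : ℝ} (hx : (x, t) ∈ closedDisk)
    (hy : (y, t) ∈ closedDisk) (hs : s ∈ Set.Ioo x y) : (s, t) ∈ disk := by
  simp only [closedDisk, disk, Set.mem_ofPred_eq] at hx hy ⊢
  rcases le_total 0 s with h | h
  · nlinarith [hs.2]
  · nlinarith [hs.1]

theorem corner_mem_closedDisk {p q : ℝ × ℝ} (hp : p ∈ closedDisk) (hq : q ∈ closedDisk) :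
    (p.1, q.2) ∈ closedDisk ∨ (q.1, p.2) ∈ closedDisk := by
  simp only [closedDisk, Set.mem_ofPred_eq] at hp hq ⊢
  by_contra! h
  linarith

end Disk

section ChordEnergy

variable {E : Type*} [NormedAddCommGroup E] [NormedSpace ℝ E]

/-- The energy density `|∂₁f|² + |∂₂f|²` of a function of two variables. -/
noncomputable def energyDensity (f : ℝ × ℝ → E) (p : ℝ × ℝ) : ℝ≥0∞ :=
  ‖fderiv ℝ f p (1, 0)‖ₑ ^ 2 + ‖fderiv ℝ f p (0, 1)‖ₑ ^ 2

/-- The energy `∫ |∂₁f(s, t)|² ds` along the horizontal chord of the disk at height `t`. The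
energy along a vertical chord is the `chordEnergy` of `f ∘ Prod.swap`. -/
noncomputable def chordEnergy (f : ℝ × ℝ → E) (t : ℝ) : ℝ≥0∞ :=
  ∫⁻ s, disk.indicator (fun p => ‖fderiv ℝ f p (1, 0)‖ₑ ^ 2) (s, t)

/-- The total energy of `f` along the horizontal and the vertical chord of the disk through `p`. -/
noncomputable def crossEnergy (f : ℝ × ℝ → E) (p : ℝ × ℝ) : ℝ≥0∞ :=
  chordEnergy f p.2 + chordEnergy (f ∘ Prod.swap) p.1

theorem measurable_enorm_sq_fderiv_apply [CompleteSpace E] (f : ℝ × ℝ → E) (h : ℝ × ℝ) :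
    Measurable fun p => ‖fderiv ℝ f p h‖ₑ ^ 2 := by
  borelize E
  exact (measurable_fderiv_apply_const ℝ f h).enorm.pow_const 2

theorem measurable_energyDensity [CompleteSpace E] (f : ℝ × ℝ → E) :
    Measurable (energyDensity f) :=
  (measurable_enorm_sq_fderiv_apply f _).add (measurable_enorm_sq_fderiv_apply f _)

theorem measurable_indicator_disk_enorm_sq_fderiv [CompleteSpace E] (f : ℝ × ℝ → E) :
    Measurable (disk.indicator fun p => ‖fderiv ℝ f p (1, 0)‖ₑ ^ 2) :=
  (measurable_enorm_sq_fderiv_apply f _).indicator measurableSet_disk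

theorem measurable_chordEnergy [CompleteSpace E] (f : ℝ × ℝ → E) : Measurable (chordEnergy f) :=
  (measurable_indicator_disk_enorm_sq_fderiv f).lintegral_prod_left'

theorem measurable_crossEnergy [CompleteSpace E] (f : ℝ × ℝ → E) : Measurable (crossEnergy f) :=
  ((measurable_chordEnergy f).comp measurable_snd).add
    ((measurable_chordEnergy _).comp measurable_fst)

theorem lintegral_chordEnergy [CompleteSpace E] (f : ℝ × ℝ → E) :
    ∫⁻ t, chordEnergy f t = ∫⁻ p in disk, ‖fderiv ℝ f p (1, 0)‖ₑ ^ 2 := by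
  rw [← lintegral_indicator measurableSet_disk, Measure.volume_eq_prod,
    lintegral_prod_symm' _ (measurable_indicator_disk_enorm_sq_fderiv f)]
  rfl

theorem fderiv_comp_swap (f : ℝ × ℝ → E) (p h : ℝ × ℝ) :
    fderiv ℝ (f ∘ Prod.swap) p h = fderiv ℝ f p.swap h.swap := by
  have := (ContinuousLinearEquiv.prodComm ℝ ℝ ℝ).comp_right_fderiv (f := f) (x := p)
  exact DFunLike.congr_fun this h

theorem energyDensity_comp_swap (f : ℝ × ℝ → E) (p : ℝ × ℝ) :
    energyDensity (f ∘ Prod.swap) p = energyDensity f p.swap := by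
  simp only [energyDensity, fderiv_comp_swap, Prod.swap_prod_mk, add_comm]

theorem setLIntegral_disk_comp_swap (g : ℝ × ℝ → ℝ≥0∞) :
    ∫⁻ p in disk, g p.swap = ∫⁻ p in disk, g p := by
  have hdisk : Prod.swap ⁻¹' disk = disk := Set.ext fun _ => swap_mem_disk
  nth_rewrite 1 [← hdisk]
  exact Measure.measurePreserving_swap.setLIntegral_comp_preimage_emb
    MeasurableEquiv.prodComm.measurableEmbedding g disk

theorem setLIntegral_disk_crossEnergy_le [CompleteSpace E] (f : ℝ × ℝ → E) :
    ∫⁻ p in disk, crossEnergy f p ≤ 2 * ∫⁻ p in disk, energyDensity f p := by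
  have hvol : volume.restrict (Set.Icc (-1 : ℝ) 1) Set.univ = 2 := by
    rw [Measure.restrict_apply_univ, Real.volume_Icc]
    norm_num
  have hswap : ∫⁻ t, chordEnergy (f ∘ Prod.swap) t =
      ∫⁻ p in disk, ‖fderiv ℝ f p (0, 1)‖ₑ ^ 2 := by
    rw [lintegral_chordEnergy]
    simp only [fderiv_comp_swap, Prod.swap_prod_mk]
    exact setLIntegral_disk_comp_swap fun p => ‖fderiv ℝ f p (0, 1)‖ₑ ^ 2
  calc ∫⁻ p in disk, crossEnergy f p
      ≤ ∫⁻ p in Set.Icc (-1) 1 ×ˢ Set.Icc (-1) 1, crossEnergy f p :=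
        lintegral_mono_set (disk_subset_closedDisk.trans closedDisk_subset_Icc_prod_Icc)
    _ = 2 * (∫⁻ t in Set.Icc (-1) 1, chordEnergy f t) +
        2 * ∫⁻ t in Set.Icc (-1) 1, chordEnergy (f ∘ Prod.swap) t := by
      rw [Measure.volume_eq_prod, ← Measure.prod_restrict,
        lintegral_prod _ (measurable_crossEnergy f).aemeasurable]
      simp only [crossEnergy, lintegral_add_right _ measurable_const, lintegral_const, hvol]
      rw [lintegral_add_left measurable_const, lintegral_const, hvol,
        lintegral_mul_const _ (measurable_chordEnergy _)]
      ring
    _ ≤ 2 * (∫⁻ t, chordEnergy f t) + 2 * ∫⁻ t, chordEnergy (f ∘ Prod.swap) t := by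
      gcongr <;> exact Measure.restrict_le_self
    _ = 2 * ∫⁻ p in disk, energyDensity f p := by
      rw [hswap, lintegral_chordEnergy, ← mul_add,
        ← lintegral_add_left (measurable_enorm_sq_fderiv_apply f _)]
      rfl

theorem enorm_sub_sq_le_of_contDiffOn_Icc [CompleteSpace E] {f : ℝ → E} {a b : ℝ} (hab : a ≤ b)
    (hf : ContDiffOn ℝ 1 f (Set.Icc a b)) :
    ‖f b - f a‖ₑ ^ 2 ≤ ENNReal.ofReal (b - a) * ∫⁻ s in Set.Icc a b, ‖deriv f s‖ₑ ^ 2 := by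
  calc ‖f b - f a‖ₑ ^ 2 ≤ (∫⁻ s in Set.Icc a b, ‖deriv f s‖ₑ) ^ 2 := by
        gcongr
        exact enorm_sub_le_lintegral_deriv_of_contDiffOn_Icc hf hab
    _ ≤ ENNReal.ofReal (b - a) * ∫⁻ s in Set.Icc a b, ‖deriv f s‖ₑ ^ 2 := by
      simpa only [Measure.restrict_apply_univ, Real.volume_Icc] using
        sq_lintegral_le_measure_univ_mul_lintegral_sq
          (aestronglyMeasurable_deriv f (volume.restrict (Set.Icc a b))).enorm

theorem enorm_sub_sq_le_chordEnergy [CompleteSpace E] {f : ℝ × ℝ → E}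
    (hf : ∀ p ∈ closedDisk, ContDiffAt ℝ 1 f p) {x y t : ℝ} (hx : (x, t) ∈ closedDisk)
    (hy : (y, t) ∈ closedDisk) : ‖f (x, t) - f (y, t)‖ₑ ^ 2 ≤ 2 * chordEnergy f t := by
  wlog hyx : y ≤ x generalizing x y
  · rw [enorm_sub_rev]
    exact this hy hx (le_of_not_ge hyx)
  have hderiv : ∀ s ∈ Set.Ioo y x, deriv (fun s => f (s, t)) s = fderiv ℝ f (s, t) (1, 0) := by
    intro s hs
    have hfs := hf _ (disk_subset_closedDisk (mem_disk_of_mem_Ioo hy hx hs))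
    exact ((hfs.differentiableAt one_ne_zero).hasFDerivAt.comp_hasDerivAt s
      ((hasDerivAt_id s).prodMk (hasDerivAt_const s t))).deriv
  have hlength : x - y ≤ 2 := by
    linarith [(closedDisk_subset_Icc_prod_Icc hx).1.2, (closedDisk_subset_Icc_prod_Icc hy).1.1]
  calc ‖f (x, t) - f (y, t)‖ₑ ^ 2
      ≤ ENNReal.ofReal (x - y) * ∫⁻ s in Set.Icc y x, ‖deriv (fun s => f (s, t)) s‖ₑ ^ 2 :=
        enorm_sub_sq_le_of_contDiffOn_Icc hyx fun s hs =>
          ((hf _ (mem_closedDisk_of_mem_Icc hy hx hs)).comp s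
            (contDiff_prodMk_left t).contDiffAt).contDiffWithinAt
    _ = ENNReal.ofReal (x - y) * ∫⁻ s in Set.Ioo y x,
          disk.indicator (fun p => ‖fderiv ℝ f p (1, 0)‖ₑ ^ 2) (s, t) := by
      rw [← restrict_Ioo_eq_restrict_Icc, setLIntegral_congr_fun measurableSet_Ioo]
      intro s hs
      simp only [hderiv s hs, Set.indicator_of_mem (mem_disk_of_mem_Ioo hy hx hs)]
    _ ≤ 2 * chordEnergy f t := by
      gcongr
      · exact ENNReal.ofReal_le_of_le_toReal hlength
      · exact setLIntegral_le_lintegral _ _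

theorem contDiffAt_comp_swap {f : ℝ × ℝ → E} (hf : ∀ p ∈ closedDisk, ContDiffAt ℝ 1 f p) :
    ∀ p ∈ closedDisk, ContDiffAt ℝ 1 (f ∘ Prod.swap) p := fun p hp =>
  (hf _ (swap_mem_closedDisk.2 hp)).comp p (contDiff_snd.prodMk contDiff_fst).contDiffAt

theorem enorm_sub_sq_le_crossEnergy [CompleteSpace E] {f : ℝ × ℝ → E}
    (hf : ∀ p ∈ closedDisk, ContDiffAt ℝ 1 f p) {p q : ℝ × ℝ} (hp : p ∈ closedDisk)
    (hq : q ∈ closedDisk) :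
    ‖f p - f q‖ₑ ^ 2 ≤ 4 * (crossEnergy f p + crossEnergy f q) := by
  wlog hr : (p.1, q.2) ∈ closedDisk generalizing p q
  · rw [enorm_sub_rev, add_comm]
    exact this hq hp ((corner_mem_closedDisk hp hq).resolve_left hr)
  have hvert : ‖f p - f (p.1, q.2)‖ₑ ^ 2 ≤ 2 * chordEnergy (f ∘ Prod.swap) p.1 :=
    enorm_sub_sq_le_chordEnergy (contDiffAt_comp_swap hf) (x := p.2) (y := q.2)
      (swap_mem_closedDisk.2 hp) (swap_mem_closedDisk.2 hr)
  have hhor : ‖f (p.1, q.2) - f q‖ₑ ^ 2 ≤ 2 * chordEnergy f q.2 :=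
    enorm_sub_sq_le_chordEnergy hf hr hq
  calc ‖f p - f q‖ₑ ^ 2 ≤ 2 * (‖f p - f (p.1, q.2)‖ₑ ^ 2 + ‖f (p.1, q.2) - f q‖ₑ ^ 2) := by
        simpa only [sub_add_sub_cancel] using
          enorm_add_sq_le (f p - f (p.1, q.2)) (f (p.1, q.2) - f q)
    _ ≤ 2 * (2 * chordEnergy (f ∘ Prod.swap) p.1 + 2 * chordEnergy f q.2) := by gcongr
    _ = 4 * (chordEnergy (f ∘ Prod.swap) p.1 + chordEnergy f q.2) := by ring
    _ ≤ 4 * (crossEnergy f p + crossEnergy f q) := by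
      gcongr
      exacts [le_add_self, le_self_add]

theorem setLIntegral_disk_enorm_sq_le_of_setIntegral_eq_zero [CompleteSpace E] {f : ℝ × ℝ → E}
    (hf : ∀ p ∈ closedDisk, ContDiffAt ℝ 1 f p) (hmean : ∫ p in disk, f p = 0) :
    ∫⁻ p in disk, ‖f p‖ₑ ^ 2 ≤ 16 * ∫⁻ p in disk, energyDensity f p := by
  have hcont : ContinuousOn f closedDisk := fun p hp => (hf p hp).continuousAt.continuousWithinAt
  calc ∫⁻ p in disk, ‖f p‖ₑ ^ 2 ≤ 2 * ∫⁻ p in disk, 4 * crossEnergy f p :=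
        setLIntegral_enorm_sq_le_of_setIntegral_eq_zero measurableSet_disk
          (volume_disk_le_four.trans_lt (by simp)).ne
          ((hcont.integrableOn_compact isCompact_closedDisk).mono_set disk_subset_closedDisk)
          hmean ((measurable_crossEnergy f).const_mul 4) fun p hp q hq => by
            simpa only [mul_add] using enorm_sub_sq_le_crossEnergy hf
              (disk_subset_closedDisk hp) (disk_subset_closedDisk hq)
    _ = 8 * ∫⁻ p in disk, crossEnergy f p := by
      rw [lintegral_const_mul _ (measurable_crossEnergy f), ← mul_assoc]
      norm_num
    _ ≤ 8 * (2 * ∫⁻ p in disk, energyDensity f p) := by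
      gcongr
      exact setLIntegral_disk_crossEnergy_le f
    _ = 16 * ∫⁻ p in disk, energyDensity f p := by ring

end ChordEnergy

section Tangential

theorem sq_le_of_tangent {A B C P Q s c : ℝ} (hc : 0 < c) (hs : s ^ 2 ≤ c ^ 2)
    (hB : B * c + P * s = 0) (hC : C * (-c) + Q * s = 0) :
    A ^ 2 ≤ (A - B) ^ 2 + (A - C) ^ 2 + (P - Q) ^ 2 := by
  have hBC : (B + C) ^ 2 ≤ (P - Q) ^ 2 := by
    refine le_of_mul_le_mul_right ?_ (pow_pos hc 2)
    calc (B + C) ^ 2 * c ^ 2 = s ^ 2 * (P - Q) ^ 2 := by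
          rw [← mul_pow, show (B + C) * c = -s * (P - Q) by linarith]
          ring
      _ ≤ (P - Q) ^ 2 * c ^ 2 := by
        rw [mul_comm]
        gcongr
  nlinarith [sq_nonneg (A - B - (A - C)), sq_nonneg (A - B - (B + C)),
    sq_nonneg (A - C - (B + C))]

theorem enorm_sq_eq_ofReal_sq (x : ℝ) : ‖x‖ₑ ^ 2 = ENNReal.ofReal (x ^ 2) := by
  rw [Real.enorm_eq_ofReal_abs, ← ENNReal.ofReal_pow (abs_nonneg x), sq_abs]

variable {f g : ℝ × ℝ → ℝ}

theorem enorm_sq_le_chordEnergy_of_tangent (hf : ∀ p ∈ closedDisk, ContDiffAt ℝ 1 f p)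
    (hg : ∀ p ∈ closedDisk, ContDiffAt ℝ 1 g p)
    (htan : ∀ p : ℝ × ℝ, p.1 ^ 2 + p.2 ^ 2 = 1 → f p * p.1 + g p * p.2 = 0)
    {p : ℝ × ℝ} (hp : p ∈ closedDisk) (hp2 : p.2 ^ 2 ≤ 1 / 2) :
    ‖f p‖ₑ ^ 2 ≤ 4 * chordEnergy f p.2 + 2 * chordEnergy g p.2 := by
  obtain ⟨x, t⟩ := p
  dsimp only at hp2 ⊢
  set c := √(1 - t ^ 2)
  have hc_sq : c ^ 2 = 1 - t ^ 2 := Real.sq_sqrt (by linarith)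
  have hc_pos : 0 < c := Real.sqrt_pos.2 (by linarith)
  have hright : c ^ 2 + t ^ 2 = 1 := by linarith
  have hleft : (-c) ^ 2 + t ^ 2 = 1 := by linarith [neg_sq c]
  have hsq : f (x, t) ^ 2 ≤ (f (x, t) - f (c, t)) ^ 2 + (f (x, t) - f (-c, t)) ^ 2 +
      (g (c, t) - g (-c, t)) ^ 2 :=
    sq_le_of_tangent hc_pos (by linarith) (htan (c, t) hright) (htan (-c, t) hleft)
  calc ‖f (x, t)‖ₑ ^ 2
      ≤ ‖f (x, t) - f (c, t)‖ₑ ^ 2 + ‖f (x, t) - f (-c, t)‖ₑ ^ 2 +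
          ‖g (c, t) - g (-c, t)‖ₑ ^ 2 := by
        simp only [enorm_sq_eq_ofReal_sq]
        rw [← ENNReal.ofReal_add (by positivity) (by positivity),
          ← ENNReal.ofReal_add (by positivity) (by positivity)]
        exact ENNReal.ofReal_le_ofReal hsq
    _ ≤ 2 * chordEnergy f t + 2 * chordEnergy f t + 2 * chordEnergy g t :=
      add_le_add (add_le_add (enorm_sub_sq_le_chordEnergy hf hp hright.le)
        (enorm_sub_sq_le_chordEnergy hf hp hleft.le))
        (enorm_sub_sq_le_chordEnergy hg hright.le hleft.le)
    _ = 4 * chordEnergy f t + 2 * chordEnergy g t := by ring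

theorem enorm_sq_le_crossEnergy_of_tangent (hf : ∀ p ∈ closedDisk, ContDiffAt ℝ 1 f p)
    (hg : ∀ p ∈ closedDisk, ContDiffAt ℝ 1 g p)
    (htan : ∀ p : ℝ × ℝ, p.1 ^ 2 + p.2 ^ 2 = 1 → f p * p.1 + g p * p.2 = 0)
    {p : ℝ × ℝ} (hp : p ∈ closedDisk) (hp2 : p.2 ^ 2 ≤ 1 / 2) :
    ‖f p‖ₑ ^ 2 ≤ 4 * (crossEnergy f p + crossEnergy g p) := by
  calc ‖f p‖ₑ ^ 2 ≤ 4 * chordEnergy f p.2 + 2 * chordEnergy g p.2 :=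
        enorm_sq_le_chordEnergy_of_tangent hf hg htan hp hp2
    _ ≤ 4 * crossEnergy f p + 4 * crossEnergy g p := by
      gcongr
      · exact le_self_add
      · norm_num
      · exact le_self_add
    _ = 4 * (crossEnergy f p + crossEnergy g p) := by rw [mul_add]

theorem setLIntegral_disk_enorm_sq_le_of_tangent (hf : ∀ p ∈ closedDisk, ContDiffAt ℝ 1 f p)
    (hg : ∀ p ∈ closedDisk, ContDiffAt ℝ 1 g p)
    (htan : ∀ p : ℝ × ℝ, p.1 ^ 2 + p.2 ^ 2 = 1 → f p * p.1 + g p * p.2 = 0) :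
    ∫⁻ p in disk, ‖f p‖ₑ ^ 2 ≤
      192 * ((∫⁻ p in disk, energyDensity f p) + ∫⁻ p in disk, energyDensity g p) := by
  let square : Set (ℝ × ℝ) := Set.Ioo (-1 / 2) (1 / 2) ×ˢ Set.Ioo (-1 / 2) (1 / 2)
  have hsquare : square ⊆ disk := by
    rintro p ⟨⟨hp1, hp1'⟩, hp2, hp2'⟩
    change p.1 ^ 2 + p.2 ^ 2 < 1
    nlinarith
  have hvol : volume square = 1 := by
    rw [Measure.volume_eq_prod, Measure.prod_prod, Real.volume_Ioo]
    norm_num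
  have hKmeas : Measurable fun p => crossEnergy f p + crossEnergy g p :=
    (measurable_crossEnergy f).add (measurable_crossEnergy g)
  have hosc : ∀ p ∈ disk, ∀ q ∈ disk, ‖f p - f q‖ₑ ^ 2 ≤
      4 * (crossEnergy f p + crossEnergy g p) + 4 * (crossEnergy f q + crossEnergy g q) := by
    intro p hp q hq
    rw [← mul_add]
    refine (enorm_sub_sq_le_crossEnergy hf (disk_subset_closedDisk hp)
      (disk_subset_closedDisk hq)).trans ?_
    gcongr <;> exact le_self_add
  have hbound : ∀ q ∈ square, ‖f q‖ₑ ^ 2 ≤ 4 * (crossEnergy f q + crossEnergy g q) :=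
    fun q hq => enorm_sq_le_crossEnergy_of_tangent hf hg htan
      (disk_subset_closedDisk (hsquare hq)) (by nlinarith [hq.2.1, hq.2.2])
  calc ∫⁻ p in disk, ‖f p‖ₑ ^ 2
      = volume square * ∫⁻ p in disk, ‖f p‖ₑ ^ 2 := by rw [hvol, one_mul]
    _ ≤ 6 * volume disk * ∫⁻ p in disk, 4 * (crossEnergy f p + crossEnergy g p) :=
      measure_mul_setLIntegral_enorm_sq_le_of_subset measurableSet_disk
        (measurableSet_Ioo.prod measurableSet_Ioo) hsquare (hKmeas.const_mul 4) hosc hbound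
    _ = 6 * volume disk *
        (4 * ((∫⁻ p in disk, crossEnergy f p) + ∫⁻ p in disk, crossEnergy g p)) := by
      rw [lintegral_const_mul _ hKmeas, lintegral_add_left (measurable_crossEnergy f)]
    _ ≤ 6 * 4 * (4 * (2 * (∫⁻ p in disk, energyDensity f p) +
        2 * ∫⁻ p in disk, energyDensity g p)) := by
      gcongr
      exacts [volume_disk_le_four, setLIntegral_disk_crossEnergy_le f,
        setLIntegral_disk_crossEnergy_le g]
    _ = 192 * ((∫⁻ p in disk, energyDensity f p) + ∫⁻ p in disk, energyDensity g p) := by ring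

theorem setLIntegral_disk_enorm_sq_le_of_tangent_right
    (hf : ∀ p ∈ closedDisk, ContDiffAt ℝ 1 f p) (hg : ∀ p ∈ closedDisk, ContDiffAt ℝ 1 g p)
    (htan : ∀ p : ℝ × ℝ, p.1 ^ 2 + p.2 ^ 2 = 1 → f p * p.1 + g p * p.2 = 0) :
    ∫⁻ p in disk, ‖g p‖ₑ ^ 2 ≤
      192 * ((∫⁻ p in disk, energyDensity f p) + ∫⁻ p in disk, energyDensity g p) := by
  have hswap := setLIntegral_disk_enorm_sq_le_of_tangent (contDiffAt_comp_swap hg)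
    (contDiffAt_comp_swap hf) fun p hp => by
      rw [add_comm]
      exact htan p.swap (by rw [← hp, add_comm, Prod.fst_swap, Prod.snd_swap])
  simp only [energyDensity_comp_swap, Function.comp_apply] at hswap
  rw [setLIntegral_disk_comp_swap (energyDensity f), setLIntegral_disk_comp_swap (energyDensity g),
    setLIntegral_disk_comp_swap fun p => ‖g p‖ₑ ^ 2] at hswap
  rwa [add_comm]

theorem setLIntegral_disk_sum_enorm_sq_le {u : Fin 3 → ℝ × ℝ → ℝ}
    (hu : ∀ j, ∀ p ∈ closedDisk, ContDiffAt ℝ 1 (u j) p)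
    (htan : ∀ p : ℝ × ℝ, p.1 ^ 2 + p.2 ^ 2 = 1 → u 0 p * p.1 + u 1 p * p.2 = 0)
    (hmean : ∫ p in disk, u 2 p = 0) :
    ∫⁻ p in disk, ∑ j, ‖u j p‖ₑ ^ 2 ≤ 384 * ∫⁻ p in disk, ∑ j, energyDensity (u j) p := by
  have hmeas (j : Fin 3) : AEMeasurable (fun p => ‖u j p‖ₑ ^ 2) (volume.restrict disk) := by
    have hcont : ContinuousOn (u j) disk := fun p hp =>
      (hu j p (disk_subset_closedDisk hp)).continuousAt.continuousWithinAt
    exact (hcont.aemeasurable measurableSet_disk).enorm.pow_const 2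
  rw [lintegral_finsetSum' _ fun j _ => hmeas j,
    lintegral_finsetSum _ fun j _ => measurable_energyDensity (u j),
    Fin.sum_univ_three, Fin.sum_univ_three]
  set e : Fin 3 → ℝ≥0∞ := fun j => ∫⁻ p in disk, energyDensity (u j) p
  calc (∫⁻ p in disk, ‖u 0 p‖ₑ ^ 2) + (∫⁻ p in disk, ‖u 1 p‖ₑ ^ 2) + ∫⁻ p in disk, ‖u 2 p‖ₑ ^ 2
      ≤ 192 * (e 0 + e 1) + 192 * (e 0 + e 1) + 16 * e 2 :=
        add_le_add (add_le_add (setLIntegral_disk_enorm_sq_le_of_tangent (hu 0) (hu 1) htan)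
          (setLIntegral_disk_enorm_sq_le_of_tangent_right (hu 0) (hu 1) htan))
          (setLIntegral_disk_enorm_sq_le_of_setIntegral_eq_zero (hu 2) hmean)
    _ ≤ 192 * (e 0 + e 1) + 192 * (e 0 + e 1) + 384 * e 2 := by
      gcongr
      norm_num
    _ = 384 * (e 0 + e 1 + e 2) := by ring

end Tangential

section Cylinder

/-- The point of `ℝ³` over `p ∈ ℝ²` at height `z`; composing a function on `ℝ³` with `atHeight z`
restricts it to a horizontal slice. -/
def atHeight (z : ℝ) (p : ℝ × ℝ) : Fin 3 → ℝ := ![p.1, p.2, z]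

theorem hasFDerivAt_atHeight (z : ℝ) (p : ℝ × ℝ) :
    HasFDerivAt (atHeight z) (ContinuousLinearMap.pi
      ![ContinuousLinearMap.fst ℝ ℝ ℝ, ContinuousLinearMap.snd ℝ ℝ ℝ, 0]) p := by
  refine hasFDerivAt_pi.2 fun i => ?_
  fin_cases i
  exacts [hasFDerivAt_fst, hasFDerivAt_snd, hasFDerivAt_const z p]

theorem contDiff_atHeight (z : ℝ) {n : WithTop ℕ∞} : ContDiff ℝ n (atHeight z) := by
  refine contDiff_pi.2 fun i => ?_
  fin_cases i
  exacts [contDiff_fst, contDiff_snd, contDiff_const]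

theorem energyDensity_comp_atHeight {f : (Fin 3 → ℝ) → ℝ} {z : ℝ} {p : ℝ × ℝ}
    (hf : DifferentiableAt ℝ f (atHeight z p)) :
    energyDensity (f ∘ atHeight z) p =
      ‖pd 0 f (atHeight z p)‖ₑ ^ 2 + ‖pd 1 f (atHeight z p)‖ₑ ^ 2 := by
  have hfst : ContinuousLinearMap.pi
      ![ContinuousLinearMap.fst ℝ ℝ ℝ, ContinuousLinearMap.snd ℝ ℝ ℝ, 0] (1, 0) =
      (Pi.single 0 1 : Fin 3 → ℝ) := by
    ext i
    fin_cases i <;> simp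
  have hsnd : ContinuousLinearMap.pi
      ![ContinuousLinearMap.fst ℝ ℝ ℝ, ContinuousLinearMap.snd ℝ ℝ ℝ, 0] (0, 1) =
      (Pi.single 1 1 : Fin 3 → ℝ) := by
    ext i
    fin_cases i <;> simp
  rw [energyDensity, (hf.hasFDerivAt.comp p (hasFDerivAt_atHeight z p)).fderiv,
    ContinuousLinearMap.comp_apply, ContinuousLinearMap.comp_apply, hfst, hsnd, pd, pd]

/-- The coordinates on `ℝ³` used for slicing: the height, followed by the horizontal
coordinates. -/
def heightEquiv : ℝ × (ℝ × ℝ) ≃ᵐ (Fin 3 → ℝ) :=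
  ((MeasurableEquiv.refl ℝ).prodCongr MeasurableEquiv.finTwoArrow.symm).trans
    (MeasurableEquiv.piFinSuccAbove (fun _ : Fin 3 => ℝ) 2).symm

theorem heightEquiv_apply (z : ℝ) (p : ℝ × ℝ) : heightEquiv (z, p) = atHeight z p := by
  ext i
  fin_cases i <;> rfl

theorem measurePreserving_heightEquiv : MeasurePreserving heightEquiv :=
  ((MeasurePreserving.id volume).prod (volume_preserving_finTwoArrow ℝ).symm).trans
    (volume_preserving_piFinSuccAbove (fun _ : Fin 3 => ℝ) 2).symm

variable {a b : ℝ}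

theorem solidCyl_subset_closedCyl : solidCyl a b ⊆ closedCyl a b := fun _ hx => ⟨hx.1.le, hx.2⟩

theorem measurableSet_solidCyl : MeasurableSet (solidCyl a b) := by
  have hlateral : IsOpen {x : Fin 3 → ℝ | x 0 ^ 2 + x 1 ^ 2 < 1} :=
    isOpen_lt (by fun_prop) (by fun_prop)
  exact hlateral.measurableSet.inter (measurable_pi_apply 2 measurableSet_Icc)

theorem isCompact_closedCyl : IsCompact (closedCyl a b) := by
  have himage : closedCyl a b =
      (fun q : ℝ × (ℝ × ℝ) => atHeight q.1 q.2) '' (Set.Icc a b ×ˢ closedDisk) := by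
    ext x
    refine ⟨fun hx => ⟨(x 2, x 0, x 1), ⟨hx.2, hx.1⟩, ?_⟩, ?_⟩
    · ext i
      fin_cases i <;> rfl
    · rintro ⟨q, hq, rfl⟩
      exact ⟨hq.2, hq.1⟩
  rw [himage]
  refine (isCompact_Icc.prod isCompact_closedDisk).image (continuous_pi fun i => ?_)
  fin_cases i
  exacts [continuous_snd.fst, continuous_snd.snd, continuous_fst]

theorem setLIntegral_solidCyl {f : (Fin 3 → ℝ) → ℝ≥0∞}
    (hf : AEMeasurable f (volume.restrict (solidCyl a b))) :
    ∫⁻ x in solidCyl a b, f x = ∫⁻ z in Set.Icc a b, ∫⁻ p in disk, f (atHeight z p) := by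
  have hpreimage : heightEquiv ⁻¹' solidCyl a b = Set.Icc a b ×ˢ disk := by
    ext ⟨z, p⟩
    rw [Set.mem_preimage, heightEquiv_apply]
    exact and_comm
  have hmp := measurePreserving_heightEquiv.restrict_preimage
    (measurableSet_solidCyl (a := a) (b := b))
  rw [← hmp.lintegral_comp_emb heightEquiv.measurableEmbedding, hpreimage,
    Measure.volume_eq_prod, setLIntegral_prod]
  · simp only [heightEquiv_apply]
  · rw [← hpreimage]
    exact hf.comp_quasiMeasurePreserving hmp.quasiMeasurePreserving

theorem setIntegral_unitDisk (f : (Fin 3 → ℝ) → ℝ) (z : ℝ) :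
    ∫ xh in unitDisk, f ![xh 0, xh 1, z] = ∫ p in disk, f (atHeight z p) :=
  (volume_preserving_finTwoArrow ℝ).setIntegral_preimage_emb
    MeasurableEquiv.finTwoArrow.measurableEmbedding (fun p => f (atHeight z p)) disk

theorem continuousOn_pd {f : (Fin 3 → ℝ) → ℝ} {U : Set (Fin 3 → ℝ)} (hU : IsOpen U)
    (hf : ContDiffOn ℝ 1 f U) (i : Fin 3) : ContinuousOn (pd i f) U :=
  (hf.continuousOn_fderiv_of_isOpen hU le_rfl).clm_apply continuousOn_const

theorem setLIntegral_solidCyl_enorm_sq_le {u : Fin 3 → (Fin 3 → ℝ) → ℝ} {U : Set (Fin 3 → ℝ)}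
    (hU : IsOpen U) (hUc : closedCyl a b ⊆ U) (hu : ∀ j, ContDiffOn ℝ 1 (u j) U)
    (htan : ∀ x : Fin 3 → ℝ, x 0 ^ 2 + x 1 ^ 2 = 1 → x 2 ∈ Set.Icc a b →
      u 0 x * x 0 + u 1 x * x 1 = 0)
    (hflux : ∀ z ∈ Set.Icc a b, ∫ xh in unitDisk, u 2 ![xh 0, xh 1, z] = 0) :
    ∫⁻ x in solidCyl a b, ∑ j, ‖u j x‖ₑ ^ 2 ≤
      384 * ∫⁻ x in solidCyl a b, ∑ j, (‖pd 0 (u j) x‖ₑ ^ 2 + ‖pd 1 (u j) x‖ₑ ^ 2) := by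
  have hmeas {f : (Fin 3 → ℝ) → ℝ} (hf : ContinuousOn f U) :
      AEMeasurable (fun x => ‖f x‖ₑ ^ 2) (volume.restrict (solidCyl a b)) :=
    ((hf.mono (solidCyl_subset_closedCyl.trans hUc)).aemeasurable
      measurableSet_solidCyl).enorm.pow_const 2
  have hslice : ∀ z ∈ Set.Icc a b, ∀ p ∈ closedDisk, ∀ j, ContDiffAt ℝ 1 (u j) (atHeight z p) :=
    fun z hz p hp j => (hu j).contDiffAt (hU.mem_nhds (hUc ⟨hp, hz⟩))
  rw [setLIntegral_solidCyl (Finset.aemeasurable_fun_sum _ fun j _ => hmeas (hu j).continuousOn),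
    setLIntegral_solidCyl, ← lintegral_const_mul' _ _ (by simp)]
  · refine setLIntegral_mono' measurableSet_Icc fun z hz => ?_
    calc ∫⁻ p in disk, ∑ j, ‖u j (atHeight z p)‖ₑ ^ 2
        ≤ 384 * ∫⁻ p in disk, ∑ j, energyDensity (u j ∘ atHeight z) p :=
          setLIntegral_disk_sum_enorm_sq_le
            (fun j p hp => (hslice z hz p hp j).comp p (contDiff_atHeight z).contDiffAt)
            (fun p hp => htan (atHeight z p) hp hz)
            ((setIntegral_unitDisk (u 2) z).symm.trans (hflux z hz))
      _ = 384 * ∫⁻ p in disk, ∑ j,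
          (‖pd 0 (u j) (atHeight z p)‖ₑ ^ 2 + ‖pd 1 (u j) (atHeight z p)‖ₑ ^ 2) := by
        rw [setLIntegral_congr_fun measurableSet_disk fun p hp => Finset.sum_congr rfl fun j _ =>
          energyDensity_comp_atHeight
            ((hslice z hz p (disk_subset_closedDisk hp) j).differentiableAt one_ne_zero)]
  · exact Finset.aemeasurable_fun_sum _ fun j _ =>
      (hmeas (continuousOn_pd hU (hu j) 0)).add (hmeas (continuousOn_pd hU (hu j) 1))

end Cylinder

theorem stmt13_general {a b : ℝ} {v : (Fin 3 → ℝ) → (Fin 3 → ℝ)} {U : Set (Fin 3 → ℝ)}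
    (hU : IsOpen U) (hUc : closedCyl a b ⊆ U) (hv : ContDiffOn ℝ 1 v U)
    (htan : ∀ x : Fin 3 → ℝ, x 0 ^ 2 + x 1 ^ 2 = 1 → x 2 ∈ Set.Icc a b →
      v x 0 * x 0 + v x 1 * x 1 = 0)
    (hflux : ∀ z ∈ Set.Icc a b, (∫ xh in unitDisk, v ![xh 0, xh 1, z] 2) = 0) :
    (∫ x in solidCyl a b, (v x 0 ^ 2 + v x 1 ^ 2 + v x 2 ^ 2)) ≤
      384 * ∫ x in solidCyl a b,
        ((pd 0 (fun y => v y 0) x) ^ 2 + (pd 0 (fun y => v y 1) x) ^ 2 +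
          (pd 0 (fun y => v y 2) x) ^ 2 + (pd 1 (fun y => v y 0) x) ^ 2 +
          (pd 1 (fun y => v y 1) x) ^ 2 + (pd 1 (fun y => v y 2) x) ^ 2) := by
  have hvj : ∀ j, ContDiffOn ℝ 1 (fun y => v y j) U := contDiffOn_pi.1 hv
  have hv_cont (j : Fin 3) : ContinuousOn (fun y => v y j) (closedCyl a b) :=
    (hvj j).continuousOn.mono hUc
  have hpd_cont (i j : Fin 3) : ContinuousOn (pd i fun y => v y j) (closedCyl a b) :=
    (continuousOn_pd hU (hvj j) i).mono hUc
  have hintegrable {f : (Fin 3 → ℝ) → ℝ} (hf : ContinuousOn f (closedCyl a b)) :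
      IntegrableOn f (solidCyl a b) :=
    (hf.integrableOn_compact isCompact_closedCyl).mono_set solidCyl_subset_closedCyl
  refine integral_le_mul_integral_of_lintegral_le (hintegrable (by fun_prop))
    (hintegrable (by fun_prop)) (fun x => by positivity) (fun x => by positivity) (by norm_num) ?_
  have hsum := setLIntegral_solidCyl_enorm_sq_le hU hUc hvj htan hflux
  simp only [Fin.sum_univ_three, enorm_sq_eq_ofReal_sq] at hsum
  simp (disch := positivity) only [ENNReal.ofReal_add]
  convert hsum using 3 with x
  · norm_num
  · exact funext fun x => by ring

/-- Poincaré inequality with horizontal gradient only: there is an absolute constant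
`C > 0` such that for every finite cylinder `D × [a,b]` and every divergence-free
`C¹` vector field `v` tangent to the lateral boundary and with vanishing flux through
each cross-section, `∫ |v|² ≤ C ∫ Σ_{i=1}^{2} Σ_{j=1}^{3} (∂_i v_j)²`, with `C`
independent of the length `b - a`. -/
theorem stmt13 : ∃ C > (0:ℝ), ∀ (a b : ℝ), a < b →
    ∀ (v : (Fin 3 → ℝ) → (Fin 3 → ℝ)) (U : Set (Fin 3 → ℝ)),
      IsOpen U → closedCyl a b ⊆ U → ContDiffOn ℝ 1 v U →
      (∀ x ∈ closedCyl a b, ∑ j : Fin 3, pd j (fun y => v y j) x = 0) →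
      (∀ x : Fin 3 → ℝ, x 0 ^ 2 + x 1 ^ 2 = 1 → x 2 ∈ Set.Icc a b →
        v x 0 * x 0 + v x 1 * x 1 = 0) →
      (∀ z ∈ Set.Icc a b, (∫ xh in unitDisk, v ![xh 0, xh 1, z] 2) = 0) →
      (∫ x in solidCyl a b, (v x 0 ^ 2 + v x 1 ^ 2 + v x 2 ^ 2)) ≤
        C * ∫ x in solidCyl a b,
          ((pd 0 (fun y => v y 0) x) ^ 2 + (pd 0 (fun y => v y 1) x) ^ 2 +
           (pd 0 (fun y => v y 2) x) ^ 2 + (pd 1 (fun y => v y 0) x) ^ 2 +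
           (pd 1 (fun y => v y 1) x) ^ 2 + (pd 1 (fun y => v y 2) x) ^ 2) :=
  ⟨384, by norm_num, fun _ _ _ _ _ hU hUc hv _ htan hflux =>
    stmt13_general hU hUc hv htan hflux⟩
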